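/- arXiv:1906.09646 — 6 statements merged into one kernel-verified Lean document; each statement's English description precedes it below -/
import Mathlib

section
/- Let q > 3 be a prime power and F_q the finite field with q elements. Then the only proper normal subgroups of the special linear group SL₂(F_q) are the trivial subgroup {I} and the subgroup {I, -I}. -/
/-!
`PSL₂(F)` is simple, so a normal subgroup `H` of `SL₂(F)` is either central or satisfies
`H ⊔ Z = ⊤`, where `Z` is the center. In the second case `SL₂(F) ⧸ H` is a quotient of `Z`, hence
abelian, and perfectness of `SL₂(F)` forces `H = ⊤`. In the first case `H` is a subgroup of
`Z = {I, -I}`, which has no subgroups besides `⊥` and itself. Both simplicity and perfectness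
rest on a nonzero element of `F` whose square is not `1`, which exists as soon as `F ≠ {0, 1, -1}`.
-/

open Matrix Subgroup
open scoped MatrixGroups

section NormalSubgroups

variable {G : Type*} [Group G]

theorem le_or_sup_eq_top_of_isSimpleGroup_quotient (K N : Subgroup G) [K.Normal] [N.Normal]
    [IsSimpleGroup (G ⧸ K)] : N ≤ K ∨ K ⊔ N = ⊤ := by
  have hN : (N.map (QuotientGroup.mk' K)).Normal :=
    Normal.map inferInstance _ (QuotientGroup.mk'_surjective K)
  refine hN.eq_bot_or_eq_top.imp (fun hbot ↦ ?_) (fun htop ↦ ?_)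
  · rwa [Subgroup.map_eq_bot_iff, QuotientGroup.ker_mk'] at hbot
  · rw [← QuotientGroup.comap_map_mk', htop, comap_top]

theorem eq_top_of_sup_isMulCommutative_eq_top [Group.IsPerfect G] {N A : Subgroup G} [N.Normal]
    [hA : IsMulCommutative A] (hNA : N ⊔ A = ⊤) : N = ⊤ :=
  top_le_iff.mp <| Group.IsPerfect.commutator_eq_top (G := G) ▸
    Normal.commutator_le_of_self_sup_commutative_eq_top hNA hA

theorem le_or_eq_top_of_isPerfect_of_isSimpleGroup_quotient [Group.IsPerfect G] (A N : Subgroup G)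
    [A.Normal] [IsMulCommutative A] [IsSimpleGroup (G ⧸ A)] [N.Normal] : N ≤ A ∨ N = ⊤ :=
  (le_or_sup_eq_top_of_isSimpleGroup_quotient A N).imp_right fun h ↦
    eq_top_of_sup_isMulCommutative_eq_top (sup_comm A N ▸ h)

theorem eq_bot_or_eq_of_le_of_subset_pair {H K : Subgroup G} {z : G} (hHK : H ≤ K)
    (hK : (K : Set G) ⊆ {1, z}) : H = ⊥ ∨ H = K := by
  refine or_iff_not_imp_left.mpr fun hH ↦ hHK.antisymm fun g hg ↦ ?_
  obtain ⟨h, hhH, h_ne⟩ := H.bot_or_exists_ne_one.resolve_left hH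
  have hhz : h = z := (hK (hHK hhH)).resolve_left h_ne
  rcases hK hg with rfl | rfl
  · exact H.one_mem
  · exact hhz ▸ hhH

end NormalSubgroups

theorem exists_ne_zero_sq_ne_one {R : Type*} [Ring R] [NoZeroDivisors R]
    (hR : 3 < ENat.card R) : ∃ a : R, a ≠ 0 ∧ a ^ 2 ≠ 1 := by
  by_contra! h
  have hcover : (Set.univ : Set R) ⊆ {0, 1, -1} := fun a _ ↦
    or_iff_not_imp_left.mpr fun ha ↦ sq_eq_one_iff.mp (h a ha)
  classical
  refine hR.not_ge ?_
  calc ENat.card R = (Set.univ : Set R).encard := (Set.encard_univ R).symm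
    _ ≤ (({0, 1, -1} : Finset R) : Set R).encard := Set.encard_le_encard (by simpa using hcover)
    _ ≤ 3 := by
      rw [Set.encard_coe_eq_coe_finsetCard]
      exact_mod_cast Finset.card_le_three

theorem mem_center_SL2_iff {R : Type*} [CommRing R] [NoZeroDivisors R] {A : SL(2, R)} :
    A ∈ center SL(2, R) ↔
      (A : Matrix (Fin 2) (Fin 2) R) = 1 ∨ (A : Matrix (Fin 2) (Fin 2) R) = -1 := by
  calc A ∈ center SL(2, R)
      ↔ ∃ r : R, r ^ 2 = 1 ∧ scalar (Fin 2) r = A :=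
        Matrix.SpecialLinearGroup.mem_center_iff
    _ ↔ scalar (Fin 2) (1 : R) = A ∨ scalar (Fin 2) (-1 : R) = A := by
      simp only [sq_eq_one_iff, or_and_right, exists_or, exists_eq_left]
    _ ↔ _ := by rw [map_neg, map_one, eq_comm, @eq_comm _ (-1)]

theorem le_center_SL2_or_eq_top_of_normal {F : Type*} [Field F] (hF : ∃ a : F, a ≠ 0 ∧ a ^ 2 ≠ 1)
    (H : Subgroup SL(2, F)) [H.Normal] : H ≤ center SL(2, F) ∨ H = ⊤ := by
  have : IsSimpleGroup PSL(2, F) := ProjectiveSpecialLinearGroup.rank_two_simple' hF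
  obtain ⟨a, ha, ha_sq⟩ := hF
  have : Group.IsPerfect SL(2, F) := ⟨SL2.commutator_eq_top ha ha_sq⟩
  exact le_or_eq_top_of_isPerfect_of_isSimpleGroup_quotient (center SL(2, F)) H

theorem stmt0_general {F : Type*} [Field F] (hF : 3 < ENat.card F) (H : Subgroup SL(2, F))
    (hnormal : H.Normal) (hproper : H ≠ ⊤) :
    H = ⊥ ∨ ∀ A : SL(2, F), A ∈ H ↔
      ((A : Matrix (Fin 2) (Fin 2) F) = 1 ∨ (A : Matrix (Fin 2) (Fin 2) F) = -1) := by
  have hcentral : H ≤ center SL(2, F) :=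
    (le_center_SL2_or_eq_top_of_normal (exists_ne_zero_sq_ne_one hF) H).resolve_right hproper
  have hpair : (center SL(2, F) : Set SL(2, F)) ⊆ {1, -1} := fun _ hA ↦
    (mem_center_SL2_iff.mp hA).imp Subtype.ext Subtype.ext
  refine (eq_bot_or_eq_of_le_of_subset_pair hcentral hpair).imp_right ?_
  rintro rfl A
  exact mem_center_SL2_iff

/-- The only proper normal subgroups of `SL₂(F_q)` for a finite field `F_q` with
`q > 3` elements are the trivial subgroup `{I}` and the subgroup `{I, -I}`. -/
theorem stmt0 (F : Type) [Field F] [Fintype F] (hq : 3 < Fintype.card F)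
    (H : Subgroup (Matrix.SpecialLinearGroup (Fin 2) F)) (hnormal : H.Normal)
    (hproper : H ≠ ⊤) :
    H = ⊥ ∨ ∀ A : Matrix.SpecialLinearGroup (Fin 2) F,
      A ∈ H ↔ ((A : Matrix (Fin 2) (Fin 2) F) = 1 ∨
        (A : Matrix (Fin 2) (Fin 2) F) = -1) :=
  stmt0_general (by rw [ENat.card_eq_coe_fintype_card]; exact_mod_cast hq) H hnormal hproper
end

section
/- Let ℓ be an odd prime. Then every proper normal subgroup H of SL₂(ℤ/ℓℤ) has index [SL₂(ℤ/ℓℤ) : H] divisible by ℓ. -/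
/-!
Modulo a normal subgroup of index prime to `p`, an element of order dividing `p` becomes trivial.
Hence a normal subgroup of index prime to `p` contains every such element, and it is the whole
group as soon as these elements generate. In characteristic `p` all transvections satisfy
`g ^ p = 1`, and over a field they generate the special linear group.
-/

section NormalSubgroup

variable {G : Type*} [Group G] {H : Subgroup G} [H.Normal]

theorem mem_of_pow_mem_of_coprime_index {m : ℕ} (hm : H.index.Coprime m) {g : G}
    (hg : g ^ m ∈ H) : g ∈ H := by
  rw [← QuotientGroup.eq_one_iff] at hg ⊢
  have pow_injective : Function.Injective fun q : G ⧸ H ↦ q ^ m :=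
    Nat.Coprime.pow_left_bijective hm |>.injective
  exact pow_injective (by simpa using hg)

theorem prime_dvd_index_of_closure_eq_top {p : ℕ} (hp : p.Prime) {S : Set G}
    (hS : Subgroup.closure S = ⊤) (hpow : ∀ g ∈ S, g ^ p = 1) (hH : H ≠ ⊤) : p ∣ H.index := by
  by_contra hdvd
  have coprime_index : H.index.Coprime p := (hp.coprime_iff_not_dvd.2 hdvd).symm
  have subset_H : S ⊆ H := fun g hg ↦
    mem_of_pow_mem_of_coprime_index coprime_index (hpow g hg ▸ H.one_mem)
  exact hH (top_unique (hS ▸ (Subgroup.closure_le H).2 subset_H))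

end NormalSubgroup

section Transvection

open Matrix Matrix.SpecialLinearGroup

variable {n : Type*} [Fintype n] [DecidableEq n]

theorem transvection_pow {R : Type*} [CommRing R] {i j : n} (hij : i ≠ j) (b : R) (k : ℕ) :
    transvection hij b ^ k = transvection hij (k • b) := by
  induction k with
  | zero => simp
  | succ k ih => rw [pow_succ, ih, succ_nsmul, transvection_add]

theorem transvection_pow_char {R : Type*} [CommRing R] (p : ℕ) [CharP R p] {i j : n}
    (hij : i ≠ j) (b : R) : transvection hij b ^ p = 1 := by
  rw [transvection_pow, nsmul_eq_mul, CharP.cast_eq_zero, zero_mul, transvection_coeff_zero]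

variable {F : Type*} [Field F]

/-- The element `w_ij(a)` of the Steinberg relations. For `a ≠ 0` it sends `e_i` to `-a⁻¹ e_j` and
`e_j` to `a e_i`, and it serves to write diagonal matrices as products of transvections; at
`a = 0` the convention `0⁻¹ = 0` makes it the identity. -/
def weylElement {i j : n} (hij : i ≠ j) (a : F) : SpecialLinearGroup n F :=
  transvection hij a * transvection hij.symm (-a⁻¹) * transvection hij a

theorem weylElement_coe {i j : n} (hij : i ≠ j) {a : F} (ha : a ≠ 0) :
    (weylElement hij a : Matrix n n F) =
      1 - single i i 1 - single j j 1 + single i j a - single j i a⁻¹ := by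
  simp only [weylElement, coe_mul, transvection_coe, ← single_neg, mul_add, mul_one, mul_neg,
    add_mul, one_mul, single_mul_single_same, ne_eq, ha, not_false_eq_true, mul_inv_cancel₀,
    neg_add_rev, hij.symm, single_mul_single_of_ne, add_zero, neg_mul, inv_mul_cancel₀,
    add_neg_cancel_left]
  abel

theorem diag2n_coe_eq_add_single {i j : n} (hij : i ≠ j) {a : F} (ha : a ≠ 0) :
    (diag2n hij a ha : Matrix n n F) =
      1 - single i i 1 - single j j 1 + single i i a + single j j a⁻¹ := by
  ext k l
  simp only [diag2n_coe, diagonal_apply, Matrix.add_apply, Matrix.sub_apply, one_apply,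
    single_apply]
  grind

theorem diag2n_eq_weylElement_mul {i j : n} (hij : i ≠ j) {a : F} (ha : a ≠ 0) :
    diag2n hij a ha = weylElement hij a * weylElement hij (-1) := by
  apply Subtype.ext
  rw [diag2n_coe_eq_add_single, coe_mul, weylElement_coe hij ha,
    weylElement_coe hij (neg_ne_zero.2 one_ne_zero)]
  simp only [← single_neg, inv_neg, inv_one, sub_neg_eq_add, mul_add, mul_sub, mul_one, sub_mul,
    add_mul, one_mul, single_mul_single_same, sub_self, ne_eq, hij.symm, not_false_eq_true,
    single_mul_single_of_ne, add_zero, zero_sub, sub_add_cancel, hij, sub_zero, zero_add,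
    add_sub_cancel_right, mul_neg, neg_neg]
  abel

theorem closure_range_toSpecialLinearGroup_eq_top :
    Subgroup.closure (Set.range
      (TransvectionStruct.toSpecialLinearGroup : TransvectionStruct n F → _)) = ⊤ := by
  set E := Subgroup.closure (Set.range
    (TransvectionStruct.toSpecialLinearGroup : TransvectionStruct n F → _))
  cases subsingleton_or_nontrivial n
  · exact Subsingleton.elim _ _
  have transvection_mem (i j : n) (hij : i ≠ j) (b : F) : transvection hij b ∈ E :=
    Subgroup.subset_closure ⟨⟨i, j, hij, b⟩, rfl⟩
  have weylElement_mem {i j : n} (hij : i ≠ j) (a : F) : weylElement hij a ∈ E :=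
    E.mul_mem (E.mul_mem (transvection_mem _ _ _ _) (transvection_mem _ _ _ _))
      (transvection_mem _ _ _ _)
  have diag2n_mem (i j : n) (hij : i ≠ j) {a : F} (ha : a ≠ 0) : diag2n hij a ha ∈ E := by
    rw [diag2n_eq_weylElement_mul]
    exact E.mul_mem (weylElement_mem hij a) (weylElement_mem hij (-1))
  exact (Subgroup.eq_top_iff' E).2 fun A ↦
    diagonal_transvection_induction' (· ∈ E) A diag2n_mem transvection_mem fun _ _ ↦ E.mul_mem

theorem stmt1_general [Finite F] (p : ℕ) [CharP F p]
    (H : Subgroup (SpecialLinearGroup n F)) [H.Normal] (hproper : H ≠ ⊤) : p ∣ H.index := by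
  refine prime_dvd_index_of_closure_eq_top (CharP.char_is_prime F p)
    closure_range_toSpecialLinearGroup_eq_top ?_ hproper
  rintro _ ⟨t, rfl⟩
  exact transvection_pow_char p t.hij t.c

end Transvection

/-- Every proper normal subgroup of `SL₂(ℤ/ℓℤ)`, for `ℓ` an odd prime,
has index divisible by `ℓ`. -/
theorem stmt1 (ℓ : ℕ) (hℓ : ℓ.Prime) (hodd : Odd ℓ)
    (H : Subgroup (Matrix.SpecialLinearGroup (Fin 2) (ZMod ℓ))) (hnormal : H.Normal)
    (hproper : H ≠ ⊤) :
    ℓ ∣ H.index := by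
  have : Fact ℓ.Prime := ⟨hℓ⟩
  exact stmt1_general ℓ H hproper
end

section
/- Let ℓ be an odd prime. Then GL₂(F_ℓ) is generated by the set J = {g ∈ GL₂(F_ℓ) : det(g - I) ≠ 0}, i.e., by the set of elements of GL₂(F_ℓ) that fix no nonzero vector of F_ℓ². -/
/-!
If a unit `c` is not an eigenvalue of `g`, then `g = (c • 1) * (c⁻¹ • g)`, and neither `c⁻¹ • g`
nor, for `c ≠ 1`, the scalar matrix `c • 1` has eigenvalue `1`. A `2 × 2` matrix with eigenvalue `1`
has its determinant as other eigenvalue, so one unit `c ≠ 1` serves for every `g` with `det g ≠ c`.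
If `det g = c`, multiply `g` by the companion matrix `k` of `X² - c X + c`: the product has
determinant `c² ≠ c`, and `k` does not have eigenvalue `1` because `1 - c + c ≠ 0`.
-/

open Matrix

section CommRing

variable (n R : Type*) [Fintype n] [DecidableEq n] [CommRing R]

/-- The set of invertible matrices without eigenvalue `1`. Over an integral domain these are the
ones that fix no nonzero vector; the condition is encoded as `det (g - 1) ≠ 0`. -/
def fixedPointFree : Set (GL n R) :=
  {g | det ((g : Matrix n n R) - 1) ≠ 0}

variable {n R}

theorem mem_fixedPointFree {g : GL n R} :
    g ∈ fixedPointFree n R ↔ det ((g : Matrix n n R) - 1) ≠ 0 :=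
  Iff.rfl

theorem inv_smul_mem_fixedPointFree {c : Rˣ} {g : GL n R}
    (hg : det ((g : Matrix n n R) - c • 1) ≠ 0) : c⁻¹ • g ∈ fixedPointFree n R := by
  have hsub : ((c⁻¹ • g : GL n R) : Matrix n n R) - 1 = c⁻¹ • ((g : Matrix n n R) - c • 1) := by
    rw [Units.val_smul, smul_sub, inv_smul_smul]
  rwa [mem_fixedPointFree, hsub, det_smul_of_tower, smul_ne_zero_iff_ne]

theorem smul_one_mem_fixedPointFree [IsReduced R] {c : Rˣ} (hc : c ≠ 1) :
    c • (1 : GL n R) ∈ fixedPointFree n R := by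
  have hsub : ((c • (1 : GL n R) : GL n R) : Matrix n n R) - 1 = ((c : R) - 1) • 1 := by
    rw [Units.val_smul, Units.val_one, Units.smul_def, sub_smul, one_smul]
  rw [mem_fixedPointFree, hsub, det_smul, det_one, mul_one]
  exact pow_ne_zero _ (sub_ne_zero.2 (Units.val_eq_one.not.2 hc))

theorem mem_closure_fixedPointFree_of_det_sub_smul_one_ne_zero [IsReduced R] {c : Rˣ} {g : GL n R}
    (hg : det ((g : Matrix n n R) - c • 1) ≠ 0) :
    g ∈ Subgroup.closure (fixedPointFree n R) := by
  have hinv : c⁻¹ • g ∈ fixedPointFree n R := inv_smul_mem_fixedPointFree hg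
  obtain rfl | hc := eq_or_ne c 1
  · rw [inv_one, one_smul] at hinv
    exact Subgroup.subset_closure hinv
  · have hfactor : c • (1 : GL n R) * c⁻¹ • g = g := Units.ext <| by
      rw [Units.val_mul, Units.val_smul, Units.val_smul, Units.val_one, smul_one_mul,
        smul_inv_smul]
    rw [← hfactor]
    exact mul_mem (Subgroup.subset_closure (smul_one_mem_fixedPointFree hc))
      (Subgroup.subset_closure hinv)

theorem det_sub_smul_one_of_det_sub_one_eq_zero {M : Matrix (Fin 2) (Fin 2) R}
    (hM : det (M - 1) = 0) (c : R) : det (M - c • 1) = (c - 1) * (c - det M) := by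
  simp only [det_fin_two, Matrix.sub_apply, Matrix.smul_apply, smul_eq_mul, one_apply_eq,
    one_apply_ne zero_ne_one, one_apply_ne one_ne_zero, sub_zero, mul_one, mul_zero] at hM ⊢
  linear_combination c * hM

theorem exists_mem_fixedPointFree_det_eq [Nontrivial R] (c : Rˣ) :
    ∃ k ∈ fixedPointFree (Fin 2) R, GeneralLinearGroup.det k = c := by
  have hdet : det !![0, -(c : R); 1, (c : R)] = c := by simp
  have hsub : det (!![0, -(c : R); 1, (c : R)] - 1) = 1 := by simp [det_fin_two]
  exact ⟨GeneralLinearGroup.mk'' _ (hdet.symm ▸ c.isUnit), hsub.trans_ne one_ne_zero,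
    Units.ext hdet⟩

theorem mem_closure_fixedPointFree_of_det_ne [IsDomain R] {c : Rˣ} (hc : c ≠ 1)
    {g : GL (Fin 2) R} (hg : GeneralLinearGroup.det g ≠ c) :
    g ∈ Subgroup.closure (fixedPointFree (Fin 2) R) := by
  by_cases hfix : det ((g : Matrix (Fin 2) (Fin 2) R) - 1) = 0
  · apply mem_closure_fixedPointFree_of_det_sub_smul_one_ne_zero (c := c)
    rw [Units.smul_def, det_sub_smul_one_of_det_sub_one_eq_zero hfix]
    exact mul_ne_zero (sub_ne_zero.2 (Units.val_eq_one.not.2 hc))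
      (sub_ne_zero.2 fun h ↦ hg (Units.ext h.symm))
  · exact Subgroup.subset_closure hfix

end CommRing

theorem stmt8_general (R : Type*) [CommRing R] [IsDomain R] [Nontrivial Rˣ] :
    Subgroup.closure (fixedPointFree (Fin 2) R) = ⊤ := by
  obtain ⟨c, hc⟩ := exists_ne (1 : Rˣ)
  refine (Subgroup.eq_top_iff' _).2 fun g ↦ ?_
  by_cases hg : GeneralLinearGroup.det g = c
  · obtain ⟨k, hk, hkc⟩ := exists_mem_fixedPointFree_det_eq c
    have hgk : GeneralLinearGroup.det (g * k) ≠ c := by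
      rwa [map_mul, hg, hkc, Ne, mul_eq_left]
    exact (Subgroup.mul_mem_cancel_right _ (Subgroup.subset_closure hk)).1
      (mem_closure_fixedPointFree_of_det_ne hc hgk)
  · exact mem_closure_fixedPointFree_of_det_ne hc hg

theorem nontrivial_zmod_units {m : ℕ} (hm : 2 < m) : Nontrivial (ZMod m)ˣ :=
  have : Fact (2 < m) := ⟨hm⟩
  ⟨-1, 1, fun h ↦ ZMod.neg_one_ne_one (congrArg Units.val h)⟩

/-- For an odd prime `ℓ`, the group `GL₂(F_ℓ)` is generated by the set of
elements `g` with `det (g - I) ≠ 0`, i.e. by the elements fixing no nonzero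
vector of `F_ℓ²`. -/
theorem stmt8 (ℓ : ℕ) (hℓ : ℓ.Prime) (hodd : Odd ℓ) :
    Subgroup.closure {g : GL (Fin 2) (ZMod ℓ) |
      Matrix.det ((g : Matrix (Fin 2) (Fin 2) (ZMod ℓ)) - 1) ≠ 0} = ⊤ := by
  have : Fact ℓ.Prime := ⟨hℓ⟩
  have : Nontrivial (ZMod ℓ)ˣ :=
    nontrivial_zmod_units (hℓ.two_le.lt_of_ne' (hodd.ne_two_of_dvd_nat dvd_rfl))
  exact stmt8_general (ZMod ℓ)
end

section
/- Let B be the Borel subgroup of GL₂(F₃) consisting of all upper triangular invertible matrices [[x, b], [0, y]] with x, y ∈ F₃^×, b ∈ F₃. Then the subgroup of B generated by the set {g ∈ B : det(g - I) ≠ 0} is exactly {g ∈ B : det(g) = 1}, which is a normal subgroup of B of index 2. -/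
/-!
An upper triangular `g` has `det g = ∏ gᵢᵢ` and `det (g - 1) = ∏ (gᵢᵢ - 1)`. If `1` and `-1` are the
only units of the base ring, the second product can be nonzero only when every `gᵢᵢ` is `-1`, so in
the `2 × 2` case such `g` have determinant `1`. Conversely, an upper triangular `g` of determinant
`1` has diagonal `(-1, -1)` or `(1, 1)`; in the second case it is the product of `-1` and `-g`, both
with diagonal `(-1, -1)`. The index is the number of values of `det` on the Borel subgroup, which is
the number of units.
-/

open Matrix

theorem relIndex_mul_card_of_le {G : Type*} [Group G] {H K : Subgroup G} (hle : H ≤ K) :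
    H.relIndex K * Nat.card H = Nat.card K := by
  rw [mul_comm, ← Subgroup.relIndex_bot_left, Subgroup.relIndex_mul_relIndex ⊥ H K bot_le hle,
    Subgroup.relIndex_bot_left]

section Borel

variable {n R : Type*} [Fintype n] [LinearOrder n] [CommRing R]

variable (n R) in
/-- The standard Borel subgroup of `GL n R`: the invertible upper triangular matrices. -/
def borelSubgroup : Subgroup (GL n R) where
  carrier := {g | (g : Matrix n n R).IsUpperTriangular}
  one_mem' := blockTriangular_one
  mul_mem' := BlockTriangular.mul
  inv_mem' {g} hg := by
    rw [Set.mem_ofPred_eq, coe_units_inv]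
    exact blockTriangular_inv_of_blockTriangular hg

theorem mem_borelSubgroup {g : GL n R} :
    g ∈ borelSubgroup n R ↔ (g : Matrix n n R).IsUpperTriangular :=
  Iff.rfl

theorem mem_borelSubgroup_fin_two {g : GL (Fin 2) R} :
    g ∈ borelSubgroup (Fin 2) R ↔ (g : Matrix (Fin 2) (Fin 2) R) 1 0 = 0 := by
  simp [mem_borelSubgroup, BlockTriangular, Fin.forall_fin_two]

theorem card_borelSubgroup_fin_two :
    Nat.card (borelSubgroup (Fin 2) R) =
      Nat.card {b : GL (Fin 2) R // (b : Matrix (Fin 2) (Fin 2) R) 1 0 = 0} :=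
  Nat.card_congr (Equiv.subtypeEquivRight fun _ ↦ mem_borelSubgroup_fin_two)

theorem neg_mem_borelSubgroup {g : GL n R} (hg : g ∈ borelSubgroup n R) :
    -g ∈ borelSubgroup n R :=
  BlockTriangular.neg hg

theorem isUnit_diag_of_mem_borelSubgroup {g : GL n R} (hg : g ∈ borelSubgroup n R) (i : n) :
    IsUnit ((g : Matrix n n R) i i) := by
  have hdet : IsUnit (∏ j, (g : Matrix n n R) j j) :=
    det_of_isUpperTriangular hg ▸ (isUnit_iff_isUnit_det _).mp g.isUnit
  exact IsUnit.prod_univ_iff.mp hdet i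

theorem det_sub_one_of_mem_borelSubgroup {g : GL n R} (hg : g ∈ borelSubgroup n R) :
    ((g : Matrix n n R) - 1).det = ∏ i, ((g : Matrix n n R) i i - 1) := by
  simp [det_of_isUpperTriangular (BlockTriangular.sub hg blockTriangular_one)]

theorem map_det_borelSubgroup [Nonempty n] :
    (borelSubgroup n R).map GeneralLinearGroup.det = ⊤ := by
  refine (Subgroup.eq_top_iff' _).mpr fun u ↦ ?_
  obtain ⟨i⟩ := ‹Nonempty n›
  let d : (n → R)ˣ := MulEquiv.piUnits.symm (Pi.mulSingle i u)
  have hprod : ∏ j, Pi.mulSingle (M := fun _ ↦ Rˣ) i u j = u := Fintype.prod_pi_mulSingle' i u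
  refine ⟨Units.map (diagonalRingHom n R) d, ?_, Units.ext ?_⟩
  · exact blockTriangular_diagonal (d : n → R)
  · calc (diagonal (d : n → R)).det
      _ = ∏ j, (Pi.mulSingle (M := fun _ ↦ Rˣ) i u j : R) := det_diagonal
      _ = u := by rw [← Units.coe_prod, hprod]

theorem relIndex_borelSubgroup_inf_ker_det [Nonempty n] :
    (borelSubgroup n R ⊓ GeneralLinearGroup.det.ker).relIndex (borelSubgroup n R) =
      Nat.card Rˣ := by
  rw [Subgroup.inf_relIndex_left, Subgroup.relIndex_ker, map_det_borelSubgroup, Subgroup.card_top]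

end Borel

section UnitsEqOneOrNegOne

variable {n R : Type*} [Fintype n] [LinearOrder n] [CommRing R]

theorem card_units_eq_two (hne : (-1 : Rˣ) ≠ 1) (hunits : ∀ u : Rˣ, u = 1 ∨ u = -1) :
    Nat.card Rˣ = 2 :=
  (Nat.card_eq_two_iff' 1).mpr ⟨-1, hne, fun u hu ↦ (hunits u).resolve_left hu⟩

theorem diag_eq_one_or_neg_one_of_mem_borelSubgroup (hunits : ∀ u : Rˣ, u = 1 ∨ u = -1)
    {g : GL n R} (hg : g ∈ borelSubgroup n R) (i : n) :
    (g : Matrix n n R) i i = 1 ∨ (g : Matrix n n R) i i = -1 := by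
  obtain ⟨u, hu⟩ := isUnit_diag_of_mem_borelSubgroup hg i
  rw [← hu]
  exact (hunits u).imp (congrArg Units.val) (congrArg Units.val)

theorem det_sub_one_ne_zero_iff_of_mem_borelSubgroup (hunits : ∀ u : Rˣ, u = 1 ∨ u = -1)
    (htwo : (-2 : R) ^ Fintype.card n ≠ 0) {g : GL n R} (hg : g ∈ borelSubgroup n R) :
    ((g : Matrix n n R) - 1).det ≠ 0 ↔ ∀ i, (g : Matrix n n R) i i = -1 := by
  rw [det_sub_one_of_mem_borelSubgroup hg]
  constructor
  · intro hdet i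
    refine (diag_eq_one_or_neg_one_of_mem_borelSubgroup hunits hg i).resolve_left fun hi ↦ hdet ?_
    exact Finset.prod_eq_zero (Finset.mem_univ i) (sub_eq_zero.mpr hi)
  · intro hdiag
    have hsub : (-1 - 1 : R) = -2 := by norm_num
    simpa only [hdiag, hsub, Finset.prod_const, Finset.card_univ] using htwo

theorem closure_diag_eq_neg_one (hunits : ∀ u : Rˣ, u = 1 ∨ u = -1) :
    Subgroup.closure {g | g ∈ borelSubgroup (Fin 2) R ∧
      ∀ i, (g : Matrix (Fin 2) (Fin 2) R) i i = -1} =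
      borelSubgroup (Fin 2) R ⊓ GeneralLinearGroup.det.ker := by
  apply le_antisymm
  · refine (Subgroup.closure_le _).mpr fun g ⟨hg, hdiag⟩ ↦ ⟨hg, Units.ext ?_⟩
    simp [det_of_isUpperTriangular hg, hdiag]
  · rintro g ⟨hg, hdet⟩
    have hprod : (g : Matrix (Fin 2) (Fin 2) R) 0 0 * (g : Matrix (Fin 2) (Fin 2) R) 1 1 = 1 := by
      rw [← Fin.prod_univ_two (fun i ↦ (g : Matrix (Fin 2) (Fin 2) R) i i),
        ← det_of_isUpperTriangular hg]
      exact congrArg Units.val hdet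
    rcases diag_eq_one_or_neg_one_of_mem_borelSubgroup hunits hg 0 with h0 | h0
    · have h1 : (g : Matrix (Fin 2) (Fin 2) R) 1 1 = 1 := by simpa [h0] using hprod
      rw [show g = -1 * -g by simp]
      refine mul_mem (Subgroup.subset_closure ⟨neg_mem_borelSubgroup (one_mem _), by simp⟩)
        (Subgroup.subset_closure ⟨neg_mem_borelSubgroup hg, Fin.forall_fin_two.mpr ?_⟩)
      simp [h0, h1]
    · have h1 : (g : Matrix (Fin 2) (Fin 2) R) 1 1 = -1 := by
        simpa [h0, neg_eq_iff_eq_neg] using hprod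
      exact Subgroup.subset_closure ⟨hg, Fin.forall_fin_two.mpr ⟨h0, h1⟩⟩

end UnitsEqOneOrNegOne

theorem stmt9_general {R : Type*} [CommRing R] (hfour : (4 : R) ≠ 0)
    (hunits : ∀ u : Rˣ, u = 1 ∨ u = -1) (K : Subgroup (GL (Fin 2) R))
    (hK : K = Subgroup.closure {h : GL (Fin 2) R |
      (h : Matrix (Fin 2) (Fin 2) R) 1 0 = 0 ∧
      Matrix.det ((h : Matrix (Fin 2) (Fin 2) R) - 1) ≠ 0}) :
    (∀ g : GL (Fin 2) R,
      g ∈ K ↔ ((g : Matrix (Fin 2) (Fin 2) R) 1 0 = 0 ∧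
        Matrix.det (g : Matrix (Fin 2) (Fin 2) R) = 1)) ∧
    (∀ b g : GL (Fin 2) R,
      (b : Matrix (Fin 2) (Fin 2) R) 1 0 = 0 → g ∈ K → b * g * b⁻¹ ∈ K) ∧
    K.relIndex (borelSubgroup (Fin 2) R) = 2 := by
  have hpow : (-2 : R) ^ Fintype.card (Fin 2) ≠ 0 := by norm_num [hfour]
  have hne : (-1 : Rˣ) ≠ 1 := fun h ↦ hfour <| by
    have hval : (-1 : R) = 1 := congrArg Units.val h
    linear_combination (-2 : R) * hval
  have hgens : {h : GL (Fin 2) R | h ∈ borelSubgroup (Fin 2) R ∧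
      Matrix.det ((h : Matrix (Fin 2) (Fin 2) R) - 1) ≠ 0} =
      {h | h ∈ borelSubgroup (Fin 2) R ∧ ∀ i, (h : Matrix (Fin 2) (Fin 2) R) i i = -1} :=
    Set.ext fun _ ↦ and_congr_right (det_sub_one_ne_zero_iff_of_mem_borelSubgroup hunits hpow)
  simp only [← mem_borelSubgroup_fin_two] at hK ⊢
  rw [hgens, closure_diag_eq_neg_one hunits] at hK
  subst hK
  refine ⟨fun g ↦ ?_, fun b g hb hg ↦ Subgroup.mem_inf.mpr ⟨?_, ?_⟩, ?_⟩
  · simp [Subgroup.mem_inf, MonoidHom.mem_ker, Units.ext_iff]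
  · exact mul_mem (mul_mem hb hg.1) (inv_mem hb)
  · exact (MonoidHom.normal_ker _).conj_mem g hg.2 b
  · rw [relIndex_borelSubgroup_inf_ker_det, card_units_eq_two hne hunits]

/-- In the Borel subgroup `B` of upper triangular matrices in `GL₂(F₃)`, the
subgroup generated by `{g ∈ B : det (g - I) ≠ 0}` is exactly
`{g ∈ B : det g = 1}`, a normal subgroup of `B` of index `2`. -/
theorem stmt9 (K : Subgroup (GL (Fin 2) (ZMod 3)))
    (hK : K = Subgroup.closure {h : GL (Fin 2) (ZMod 3) |
      (h : Matrix (Fin 2) (Fin 2) (ZMod 3)) 1 0 = 0 ∧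
      Matrix.det ((h : Matrix (Fin 2) (Fin 2) (ZMod 3)) - 1) ≠ 0}) :
    (∀ g : GL (Fin 2) (ZMod 3),
      g ∈ K ↔ ((g : Matrix (Fin 2) (Fin 2) (ZMod 3)) 1 0 = 0 ∧
        Matrix.det (g : Matrix (Fin 2) (Fin 2) (ZMod 3)) = 1)) ∧
    (∀ b g : GL (Fin 2) (ZMod 3),
      (b : Matrix (Fin 2) (Fin 2) (ZMod 3)) 1 0 = 0 → g ∈ K → b * g * b⁻¹ ∈ K) ∧
    Nat.card {b : GL (Fin 2) (ZMod 3) //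
      (b : Matrix (Fin 2) (Fin 2) (ZMod 3)) 1 0 = 0} = 2 * Nat.card K := by
  obtain ⟨hmem, hconj, hindex⟩ := stmt9_general (by decide) (by decide) K hK
  have hle : K ≤ borelSubgroup (Fin 2) (ZMod 3) :=
    fun g hg ↦ mem_borelSubgroup_fin_two.mpr ((hmem g).mp hg).1
  exact ⟨hmem, hconj, by
    rw [← card_borelSubgroup_fin_two, ← relIndex_mul_card_of_le hle, hindex]⟩
end

section
/- Let n > 1 be an odd squarefree integer and let G be a subgroup of GL₂(ℤ/nℤ) such that: (a) for every prime ℓ dividing n, the image of G under the reduction map GL₂(ℤ/nℤ) → GL₂(ℤ/ℓℤ) is all of GL₂(ℤ/ℓℤ), and (b) the image of G under the determinant map is all of (ℤ/nℤ)^×. Then G = GL₂(ℤ/nℤ). -/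
/-!
Goursat's lemma alone would allow `G` to be a fibre product over a common quotient of two factors
`GL₂(𝔽_p)`. The point is that already `⁅G, G⁆` contains the kernel `SL₂(ℤ/nℤ)` of the determinant,
which is shown by splitting off the largest prime `ℓ` dividing `n = mℓ`. Modulo `m` the claim holds
by induction. Modulo `ℓ`, the transvections are commutators, hence reductions of elements `h` of
`⁅G, G⁆`. Every prime `p ∣ m` satisfies `p + 1 < ℓ`, so `ℓ` does not divide
`|GL₂(𝔽_p)| = p(p - 1)²(p + 1)`, and the exponent `k` of `GL₂(ℤ/mℤ)` is prime to `ℓ`. The powers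
`h ^ k` are then trivial modulo `m` while their reductions still generate `SL₂(𝔽_ℓ)`.
-/

section

open Matrix
open scoped MatrixGroups commutatorElement

variable {Γ Q R A F ι : Type*} [Group Γ] [Group Q] [CommRing R] [CommRing A] [Field F]
  [Fintype ι] [DecidableEq ι]

theorem le_of_map_le_map_of_inf_ker_le {f : Γ →* Q} {H K : Subgroup Γ} (hHK : H ≤ K)
    (hmap : K.map f ≤ H.map f) (hker : K ⊓ f.ker ≤ H) : K ≤ H := by
  intro s hs
  obtain ⟨h, hh, hhs⟩ := hmap (Subgroup.mem_map_of_mem f hs)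
  have hdiv : h⁻¹ * s ∈ K ⊓ f.ker :=
    Subgroup.mem_inf.mpr ⟨K.mul_mem (K.inv_mem (hHK hh)) hs, by
      rw [MonoidHom.mem_ker, map_mul, map_inv, hhs, inv_mul_cancel]⟩
  exact (H.mul_mem_cancel_left (H.inv_mem hh)).mp (hker hdiv)

theorem transvection_pow_s14 {i j : ι} (hij : i ≠ j) (c : R) (k : ℕ) :
    SpecialLinearGroup.transvection hij c ^ k = SpecialLinearGroup.transvection hij (k * c) := by
  induction k with
  | zero => simp
  | succ k ih =>
    rw [pow_succ, ih, ← SpecialLinearGroup.transvection_add, Nat.cast_succ, add_one_mul]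

theorem toGL_transvection_mem_commutator {u : Rˣ} (hu : IsUnit (u - 1 : R)) {i j : ι}
    (hij : i ≠ j) (c : R) :
    (SpecialLinearGroup.transvection hij c).toGL ∈ commutator (GL ι R) := by
  obtain ⟨b, rfl⟩ : ∃ b, (u - 1 : R) * b = c := hu.dvd.imp fun _ => Eq.symm
  let d : GL ι R :=
    Units.map (diagonalRingHom ι R : (ι → R) →* Matrix ι ι R)
      (MulEquiv.piUnits.symm (Pi.mulSingle i u))
  let t : GL ι R := (SpecialLinearGroup.transvection hij b).toGL
  have hcomm : ⁅d, t⁆ = (SpecialLinearGroup.transvection hij ((u - 1 : R) * b)).toGL := by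
    rw [commutatorElement_def, mul_inv_eq_iff_eq_mul, mul_inv_eq_iff_eq_mul, ← map_mul,
      ← SpecialLinearGroup.transvection_add]
    refine Units.ext ?_
    change diagonal (fun k => ((Pi.mulSingle i u : ι → Rˣ) k : R)) * (1 + single i j b) =
      (1 + single i j ((u - 1 : R) * b + b)) * diagonal fun k => ((Pi.mulSingle i u : ι → Rˣ) k : R)
    rw [mul_add, add_mul, mul_one, one_mul]
    ext a c
    simp only [Matrix.add_apply, diagonal_mul, mul_diagonal, single_apply, sub_mul, one_mul,
      sub_add_cancel]
    grind [Units.val_one]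
  rw [← hcomm]
  exact Subgroup.commutator_mem_commutator (Subgroup.mem_top _) (Subgroup.mem_top _)

theorem map_det_ker_le (f : R →+* A) :
    (GeneralLinearGroup.det (n := ι) (R := R)).ker.map (GeneralLinearGroup.map f) ≤
      GeneralLinearGroup.det.ker := by
  rintro _ ⟨s, hs, rfl⟩
  rw [MonoidHom.mem_ker, GeneralLinearGroup.map_det, MonoidHom.mem_ker.mp hs, map_one]

theorem det_ker_le_of_toGL_transvection_mem {H : Subgroup (GL (Fin 2) F)}
    (hH : ∀ (i j : Fin 2) (hij : i ≠ j) (c : F),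
      (SpecialLinearGroup.transvection hij c).toGL ∈ H) :
    (GeneralLinearGroup.det (n := Fin 2) (R := F)).ker ≤ H := by
  intro s hs
  let s' : SL(2, F) := ⟨s, congrArg Units.val hs⟩
  have hs' : s'.toGL = s := Units.ext rfl
  rw [← hs']
  exact SL2.transvection_induction (fun t => t.toGL ∈ H) hH
    (fun _ _ ha hb => by simpa only [map_mul] using H.mul_mem ha hb) s'

theorem det_ker_le_commutator {u : Fˣ} (hu : u ≠ 1) :
    (GeneralLinearGroup.det (n := Fin 2) (R := F)).ker ≤ commutator (GL (Fin 2) F) :=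
  det_ker_le_of_toGL_transvection_mem fun _ _ hij c =>
    toGL_transvection_mem_commutator (sub_ne_zero.mpr (Units.val_eq_one.not.mpr hu)).isUnit hij c

theorem det_ker_le_map_inf_ker {H : Subgroup Γ} {g : Γ →* GL (Fin 2) F} (f : Γ →* Q)
    (hexp : (Monoid.exponent Q : F) ≠ 0) (hH : GeneralLinearGroup.det.ker ≤ H.map g) :
    GeneralLinearGroup.det.ker ≤ (H ⊓ f.ker).map g := by
  refine det_ker_le_of_toGL_transvection_mem fun i j hij c => ?_
  obtain ⟨h, hh, hgh⟩ := hH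
    (SpecialLinearGroup.coeToGL_det
      (SpecialLinearGroup.transvection hij ((Monoid.exponent Q : F)⁻¹ * c)))
  refine ⟨h ^ Monoid.exponent Q, Subgroup.mem_inf.mpr ⟨H.pow_mem hh _, ?_⟩, ?_⟩
  · rw [MonoidHom.mem_ker, map_pow, Monoid.pow_exponent_eq_one]
  · rw [map_pow, hgh, ← map_pow, transvection_pow_s14, mul_inv_cancel_left₀ hexp]

theorem det_ker_le_commutator_of_prod_injective {f : R →+* A} {g : R →+* F}
    (hfg : Function.Injective (f.prod g)) {u : Fˣ} (hu : u ≠ 1)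
    (hexp : (Monoid.exponent (GL (Fin 2) A) : F) ≠ 0) {G : Subgroup (GL (Fin 2) R)}
    (hA : GeneralLinearGroup.det.ker ≤
      ⁅G.map (GeneralLinearGroup.map f), G.map (GeneralLinearGroup.map f)⁆)
    (hF : G.map (GeneralLinearGroup.map g) = ⊤) :
    GeneralLinearGroup.det.ker ≤ ⁅G, G⁆ := by
  have hFG : GeneralLinearGroup.det.ker ≤ ⁅G, G⁆.map (GeneralLinearGroup.map g) := by
    rw [Subgroup.map_commutator, hF]
    exact det_ker_le_commutator hu
  refine le_of_map_le_map_of_inf_ker_le (f := GeneralLinearGroup.map f) ?_ ?_ ?_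
  · exact (Subgroup.commutator_mono le_top le_top).trans (Abelianization.commutator_subset_ker _)
  · rw [Subgroup.map_commutator]
    exact (map_det_ker_le f).trans hA
  · rintro s ⟨hs, hfs⟩
    obtain ⟨h, ⟨hh, hfh⟩, hgh⟩ := det_ker_le_map_inf_ker (GeneralLinearGroup.map f) hexp hFG
      (map_det_ker_le g (Subgroup.mem_map_of_mem _ hs))
    have hfhs : GeneralLinearGroup.map f h = GeneralLinearGroup.map f s := hfh.trans hfs.symm
    have hhs : h = s := GeneralLinearGroup.ext fun i j => hfg <|
      Prod.ext (congr($hfhs i j)) (congr($hgh i j))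
    exact hhs ▸ hh

theorem card_GL_two [Finite F] :
    Nat.card (GL (Fin 2) F) =
      Nat.card F * (Nat.card F - 1) ^ 2 * (Nat.card F + 1) := by
  have := Fintype.ofFinite F
  obtain ⟨q, hq⟩ : ∃ q, Fintype.card F = q + 1 := Nat.exists_eq_add_one.mpr Fintype.card_pos
  have hsq : (q + 1) ^ 2 - 1 = q * (q + 2) :=
    Nat.sub_eq_of_eq_add (by ring)
  have hmul : (q + 1) ^ 2 - (q + 1) = (q + 1) * q := by
    rw [sq, ← Nat.mul_sub_one, Nat.add_sub_cancel]
  rw [card_GL_field, Fin.prod_univ_two, Nat.card_eq_fintype_card, hq]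
  rw [Fin.val_zero, Fin.val_one, pow_zero, pow_one, hsq, hmul, Nat.add_sub_cancel]
  ring

theorem not_dvd_card_GL_two [Finite F] {ℓ : ℕ} (hℓ : ℓ.Prime) (hF : Nat.card F + 1 < ℓ) :
    ¬ ℓ ∣ Nat.card (GL (Fin 2) F) := by
  have hcard : 1 < Nat.card F := Finite.one_lt_card
  have not_dvd {a : ℕ} (ha : 0 < a) (haℓ : a < ℓ) : ¬ ℓ ∣ a := Nat.not_dvd_of_pos_of_lt ha haℓ
  rw [card_GL_two, hℓ.dvd_mul, hℓ.dvd_mul, not_or, not_or]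
  exact ⟨⟨not_dvd (by lia) (by lia), fun h => not_dvd (by lia) (by lia) (hℓ.dvd_of_dvd_pow h)⟩,
    not_dvd (by lia) hF⟩

theorem card_GL_dvd_prod_card_GL {κ : Type*} [Fintype κ] {S : κ → Type*} [∀ k, CommRing (S k)]
    {f : R →+* ∀ k, S k} (hf : Function.Injective f) :
    Nat.card (GL ι R) ∣ ∏ k, Nat.card (GL ι (S k)) := by
  rw [← Nat.card_pi]
  refine Subgroup.card_dvd_of_injective
    (MonoidHom.pi fun k => GeneralLinearGroup.map ((Pi.evalRingHom S k).comp f)) fun s t hst => ?_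
  exact GeneralLinearGroup.ext fun i j => hf <| funext fun k => congr($hst k i j)

theorem not_dvd_card_GL_two_zmod {m ℓ : ℕ} (hm : Squarefree m) (hℓ : ℓ.Prime)
    (hlt : ∀ p, p.Prime → p ∣ m → p + 1 < ℓ) : ¬ ℓ ∣ Nat.card (GL (Fin 2) (ZMod m)) := by
  have hcoprime : Pairwise (Function.onFun Nat.Coprime fun p : m.primeFactors => (p : ℕ)) :=
    fun p q hpq => (Nat.coprime_primes (Nat.prime_of_mem_primeFactors p.2)
      (Nat.prime_of_mem_primeFactors q.2)).mpr (Subtype.coe_ne_coe.mpr hpq)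
  have hprod : m = ∏ p : m.primeFactors, (p : ℕ) := by
    rw [Finset.prod_coe_sort m.primeFactors fun p => p, Nat.prod_primeFactors_of_squarefree hm]
  let e : ZMod m ≃+* ∀ p : m.primeFactors, ZMod p :=
    (ZMod.ringEquivCongr hprod).trans (ZMod.prodEquivPi _ hcoprime)
  have hdvd : Nat.card (GL (Fin 2) (ZMod m)) ∣
      ∏ p : m.primeFactors, Nat.card (GL (Fin 2) (ZMod p)) :=
    card_GL_dvd_prod_card_GL (f := (e : _ →+* _)) e.injective
  intro h
  obtain ⟨p, -, hp⟩ := (hℓ.prime.dvd_finsetProd_iff _).mp (h.trans hdvd)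
  have : Fact (p : ℕ).Prime := ⟨Nat.prime_of_mem_primeFactors p.2⟩
  refine not_dvd_card_GL_two hℓ ?_ hp
  rw [Nat.card_zmod]
  exact hlt p this.out (Nat.dvd_of_mem_primeFactors p.2)

theorem castHom_prod_castHom_injective {m ℓ : ℕ} (h : m.Coprime ℓ) :
    Function.Injective ((ZMod.castHom (dvd_mul_right m ℓ) (ZMod m)).prod
      (ZMod.castHom (dvd_mul_left ℓ m) (ZMod ℓ))) := by
  rw [Subsingleton.elim (RingHom.prod _ _) (ZMod.chineseRemainder h : _ →+* _)]
  exact (ZMod.chineseRemainder h).injective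

theorem exists_mul_prime_of_odd_of_squarefree {n : ℕ} (hn : n ≠ 1) (hodd : Odd n)
    (hsf : Squarefree n) :
    ∃ m ℓ, n = m * ℓ ∧ ℓ.Prime ∧ m.Coprime ℓ ∧ ∀ p, p.Prime → p ∣ m → p + 1 < ℓ := by
  obtain ⟨ℓ, hℓmem, hmax⟩ := n.primeFactors.exists_max_image id
    (Nat.nonempty_primeFactors.mpr (by have := hodd.pos; lia))
  have hℓ := Nat.prime_of_mem_primeFactors hℓmem
  obtain ⟨m, rfl⟩ := exists_eq_mul_left_of_dvd (Nat.dvd_of_mem_primeFactors hℓmem)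
  have hcop : m.Coprime ℓ := Nat.coprime_of_squarefree_mul hsf
  refine ⟨m, ℓ, rfl, hℓ, hcop, fun p hp hpm => ?_⟩
  have hle : p ≤ ℓ := hmax p (Nat.mem_primeFactors.mpr ⟨hp, hpm.mul_right ℓ, hsf.ne_zero⟩)
  have hne : p ≠ ℓ := by
    rintro rfl
    exact hp.ne_one (Nat.eq_one_of_dvd_coprimes hcop hpm dvd_rfl)
  obtain ⟨a, ha⟩ := hodd.of_dvd_nat (hpm.mul_right ℓ)
  obtain ⟨b, hb⟩ := hodd.of_dvd_nat (dvd_mul_left ℓ m)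
  lia

theorem det_ker_le_commutator_of_map_eq_top {n : ℕ} (hodd : Odd n) (hsf : Squarefree n)
    {G : Subgroup (GL (Fin 2) (ZMod n))}
    (hG : ∀ (ℓ : ℕ) (_ : ℓ.Prime) (hdvd : ℓ ∣ n),
      G.map (GeneralLinearGroup.map (ZMod.castHom hdvd (ZMod ℓ))) = ⊤) :
    GeneralLinearGroup.det.ker ≤ ⁅G, G⁆ := by
  induction n using Nat.strong_induction_on with
  | _ n ih =>
  obtain rfl | hn := eq_or_ne n 1
  · intro s _
    rw [Subsingleton.elim s 1]
    exact one_mem _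
  obtain ⟨m, ℓ, rfl, hℓ, hcop, hlt⟩ := exists_mul_prime_of_odd_of_squarefree hn hodd hsf
  have : Fact ℓ.Prime := ⟨hℓ⟩
  have hmn : m ∣ m * ℓ := dvd_mul_right m ℓ
  have hsfm : Squarefree m := hsf.squarefree_of_dvd hmn
  have hm : m ≠ 0 := hsfm.ne_zero
  have : NeZero m := ⟨hm⟩
  have hℓodd : Odd ℓ := hodd.of_dvd_nat (dvd_mul_left ℓ m)
  have : Fact (2 < ℓ) := ⟨hℓ.two_le.lt_of_ne (by rintro rfl; exact absurd hℓodd (by decide))⟩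
  have hneg : (-1 : (ZMod ℓ)ˣ) ≠ 1 := fun h => ZMod.neg_one_ne_one (congrArg Units.val h)
  have hexp : (Monoid.exponent (GL (Fin 2) (ZMod m)) : ZMod ℓ) ≠ 0 := fun h =>
    not_dvd_card_GL_two_zmod hsfm hℓ hlt
      (((ZMod.natCast_eq_zero_iff _ _).mp h).trans Group.exponent_dvd_nat_card)
  refine det_ker_le_commutator_of_prod_injective (castHom_prod_castHom_injective hcop)
    hneg hexp ?_ (hG ℓ hℓ (dvd_mul_left ℓ m))
  refine ih m (lt_mul_of_one_lt_right hm.bot_lt hℓ.one_lt) (hodd.of_dvd_nat hmn) hsfm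
    fun p hp hpm => ?_
  rw [Subgroup.map_map, ← GeneralLinearGroup.map_comp, ZMod.castHom_comp]
  exact hG p hp (hpm.trans hmn)

end

/-- If `n > 1` is odd and squarefree and `G ≤ GL₂(ℤ/nℤ)` surjects onto
`GL₂(ℤ/ℓℤ)` for every prime `ℓ ∣ n` and has surjective determinant, then
`G = GL₂(ℤ/nℤ)`. -/
theorem stmt14 (n : ℕ) (hn : 1 < n) (hodd : Odd n) (hsf : Squarefree n)
    (G : Subgroup (GL (Fin 2) (ZMod n)))
    (hred : ∀ (ℓ : ℕ) (_ : ℓ.Prime) (hdvd : ℓ ∣ n),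
      Subgroup.map (Units.map
        (((ZMod.castHom hdvd (ZMod ℓ)).mapMatrix :
          Matrix (Fin 2) (Fin 2) (ZMod n) →+* Matrix (Fin 2) (Fin 2) (ZMod ℓ)) :
            Matrix (Fin 2) (Fin 2) (ZMod n) →* Matrix (Fin 2) (Fin 2) (ZMod ℓ))) G = ⊤)
    (hdet : Subgroup.map Matrix.GeneralLinearGroup.det G = ⊤) :
    G = ⊤ := by
  have hker : Matrix.GeneralLinearGroup.det.ker ≤ G :=
    (det_ker_le_commutator_of_map_eq_top hodd hsf hred).trans (Subgroup.commutator_le_self G)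
  exact top_le_iff.mp <| le_of_map_le_map_of_inf_ker_le le_top (le_top.trans_eq hdet.symm)
    (inf_le_right.trans hker)
end

section
/- Let G be the subgroup of GL₂(F₅) generated by the matrices [[0, 3], [3, 4]], [[2, 0], [0, 2]], and [[3, 0], [4, 4]]. Then the image of G in the quotient of GL₂(F₅) by its subgroup of scalar matrices (i.e., the image of G in PGL₂(F₅)) is isomorphic to the symmetric group S₄. -/
/-- The subgroup of scalar matrices in `GL₂(F₅)`, i.e. the image of
`(F₅)ˣ` under the scalar embedding. -/
def scalarSubgroup : Subgroup (GL (Fin 2) (ZMod 5)) :=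
  (Units.map ((Matrix.scalar (Fin 2)).toMonoidHom :
    ZMod 5 →* Matrix (Fin 2) (Fin 2) (ZMod 5))).range

instance : scalarSubgroup.Normal := by
  constructor
  rintro x ⟨u, rfl⟩ g
  refine ⟨u, ?_⟩
  have hz : ∀ g' : GL (Fin 2) (ZMod 5),
      g' * (Units.map ((Matrix.scalar (Fin 2)).toMonoidHom :
        ZMod 5 →* Matrix (Fin 2) (Fin 2) (ZMod 5))) u =
      (Units.map ((Matrix.scalar (Fin 2)).toMonoidHom :
        ZMod 5 →* Matrix (Fin 2) (Fin 2) (ZMod 5))) u * g' := by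
    intro g'
    apply Units.ext
    simp only [Units.val_mul, Units.coe_map, RingHom.toMonoidHom_eq_coe,
      MonoidHom.coe_coe]
    exact ((Matrix.scalar_commute ((u : ZMod 5)) (fun r' => Commute.all _ _)
      (g' : Matrix (Fin 2) (Fin 2) (ZMod 5))).eq).symm
  rw [hz g, mul_assoc, mul_inv_cancel, mul_one]

/-
`PGL₂(F₅)` acts by conjugation on the trace-zero matrices. The image of `G` permutes, up to sign,
the vectors of a basis that is orthogonal for the determinant form, so it acts as the rotation group
of a cube with these axes; that group is `S₄`, acting on the four diagonals. Surjectivity holds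
because a 4-cycle and a transposition of cyclically adjacent points generate `S₄`. For faithfulness,
a matrix fixing the four diagonals, which form a projective frame, acts as a scalar on trace-zero
matrices; multiplicativity of conjugation forces that scalar to be `1`, so the matrix is central.
-/

open Matrix Matrix.GeneralLinearGroup MulAction ConjAct Equiv
open scoped LinearAlgebra.Projectivization Pointwise

section Group

variable {Γ : Type*} [Group Γ]

theorem nonempty_map_mk'_mulEquiv {P : Type*} [Group P] {N : Subgroup Γ} [N.Normal]
    {G : Subgroup Γ} {φ : G →* P} (hφ : Function.Surjective φ) (hker : φ.ker = N.subgroupOf G) :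
    Nonempty (G.map (QuotientGroup.mk' N) ≃* P) := by
  have hker_mk : ((QuotientGroup.mk' N).subgroupMap G).ker = φ.ker := by
    ext g
    rw [hker, MonoidHom.mem_ker, Subtype.ext_iff, Subgroup.mem_subgroupOf]
    exact QuotientGroup.eq_one_iff g.1
  exact ⟨(QuotientGroup.liftEquiv _ ((QuotientGroup.mk' N).subgroupMap_surjective G)
    hker_mk.symm).symm.trans (QuotientGroup.liftEquiv _ hφ rfl)⟩

theorem eq_top_of_isCycle_mem_of_swap_mul_mem {α : Type*} [Fintype α] [DecidableEq α]
    {σ : Perm α} (hσ : σ.IsCycle) (hsupp : σ.support = Finset.univ) (a : α)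
    {H : Subgroup (Perm α)} (hmem : σ ∈ H) (hswap : swap a (σ a) * σ ∈ H) : H = ⊤ := by
  rw [eq_top_iff, ← Perm.closure_cycle_adjacent_swap hσ hsupp a, Subgroup.closure_le]
  exact Set.pair_subset hmem ((H.mul_mem_cancel_right hmem).1 hswap)

variable {X ι : Type*} [MulAction Γ X] {x : ι → X}

theorem mem_stabilizer_range_of_smul_eq {g : Γ} {s : Perm ι} (h : ∀ i, g • x i = x (s i)) :
    g ∈ stabilizer Γ (Set.range x) := by
  have hcomp : (fun i ↦ g • x i) = x ∘ s := funext h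
  rw [mem_stabilizer_iff, ← Set.range_smul, hcomp, s.surjective.range_comp]

/-- The permutation representation, on the index type of an injective family `x` of points, of the
group of elements preserving the set of these points. -/
noncomputable def indexPerm (hx : Function.Injective x) :
    stabilizer Γ (Set.range x) →* Perm ι :=
  (Equiv.ofInjective x hx).symm.permCongrHom.toMonoidHom.comp (toPermHom _ (Set.range x))

theorem apply_indexPerm (hx : Function.Injective x) (g : stabilizer Γ (Set.range x)) (i : ι) :
    x (indexPerm hx g i) = (g : Γ) • x i :=
  apply_ofInjective_symm hx _

theorem indexPerm_eq_iff (hx : Function.Injective x) {g : stabilizer Γ (Set.range x)}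
    {s : Perm ι} : indexPerm hx g = s ↔ ∀ i, (g : Γ) • x i = x (s i) := by
  simp only [Perm.ext_iff, ← apply_indexPerm hx, hx.eq_iff]

end Group

theorem eigenvalue_eq_of_map_sum_eq_smul {R V ι : Type*} [Ring R] [AddCommGroup V] [Module R V]
    [Fintype ι] {f : V →ₗ[R] V} {v : ι → V} {c : ι → R} {d : R} (hv : LinearIndependent R v)
    (hf : ∀ i, f (v i) = c i • v i) (hsum : f (∑ i, v i) = d • ∑ i, v i) (i : ι) : c i = d := by
  have hzero : ∑ i, (c i - d) • v i = 0 := by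
    simp only [sub_smul, Finset.sum_sub_distrib, ← hf, ← map_sum, ← Finset.smul_sum, hsum, sub_self]
  exact sub_eq_zero.1 (Fintype.linearIndependent_iff.1 hv _ hzero i)

theorem toConjAct_smul_mk_eq_mk_iff {K R : Type*} [Field K] [Ring R] [Algebra K R] (u : Rˣ)
    {a b : R} (ha : a ≠ 0) (hb : b ≠ 0) :
    toConjAct u • Projectivization.mk K a ha = Projectivization.mk K b hb ↔
      ∃ c : Kˣ, u * a = c • (b * u) := by
  rw [Projectivization.smul_mk, Projectivization.mk_eq_mk_iff]
  refine exists_congr fun c ↦ ?_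
  rw [units_smul_def, ofConjAct_toConjAct, Units.eq_mul_inv_iff_mul_eq, smul_mul_assoc, eq_comm]

theorem toConjAct_smul_eq_self_of_mem_center {n K : Type*} [Fintype n] [DecidableEq n] [Field K]
    {A : GL n K} (hA : A ∈ Subgroup.center (GL n K)) (x : ℙ K (Matrix n n K)) :
    toConjAct A • x = x := by
  obtain ⟨r, hr⟩ := mem_center_iff_val_mem_range_scalar.1 hA
  induction x with | h M hM => ?_
  refine (toConjAct_smul_mk_eq_mk_iff A hM hM).2 ⟨1, ?_⟩
  rw [one_smul, ← hr]
  exact scalar_commute r (Commute.all r) M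

theorem mem_center_of_val_eq_scalar {R : Type*} [CommRing R] {A : GL (Fin 2) R} {r : R}
    (hA : A.1 = !![r, 0; 0, r]) : A ∈ Subgroup.center (GL (Fin 2) R) := by
  refine mem_center_iff_val_mem_range_scalar.2 ⟨r, ?_⟩
  rw [hA, scalar_apply, diagonal_fin_two]

theorem scalarSubgroup_eq_center : scalarSubgroup = Subgroup.center (GL (Fin 2) (ZMod 5)) :=
  center_eq_range_scalar.symm

section Cube

local instance : Fact (Nat.Prime 5) := ⟨Nat.prime_five⟩

/-- The axes of the cube: pairwise anticommuting trace-zero matrices with square `1`, that is, an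
orthogonal basis of the trace-zero matrices for the determinant form, whose vectors all have the
same norm. -/
def cubeAxis : Fin 3 → Matrix (Fin 2) (Fin 2) (ZMod 5) :=
  ![!![1, 4; 0, 4], !![1, 0; 2, 4], !![2, 3; 4, 3]]

/-- Direction vectors of the four diagonals of the cube with axes `cubeAxis`. They are numbered so
that the generator `!![3, 0; 4, 4]` acts as `finRotate 4`, and their signs are chosen so that they
add up to `0`. -/
def cubeDiagonal : Fin 4 → Matrix (Fin 2) (Fin 2) (ZMod 5) :=
  ![cubeAxis 0 + cubeAxis 1 + cubeAxis 2, cubeAxis 0 - cubeAxis 1 - cubeAxis 2,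
    -cubeAxis 0 + cubeAxis 1 - cubeAxis 2, -cubeAxis 0 - cubeAxis 1 + cubeAxis 2]

theorem cubeAxis_zero_mul_cubeAxis_one : cubeAxis 0 * cubeAxis 1 = (2 : ZMod 5) • cubeAxis 2 := by
  decide

theorem cubeAxis_eq_smul_cubeDiagonal_add (k : Fin 3) :
    cubeAxis k = (3 : ZMod 5) • (cubeDiagonal 0 + cubeDiagonal k.succ) := by
  decide +revert

theorem cubeDiagonal_ne_zero (i : Fin 4) : cubeDiagonal i ≠ 0 := by
  decide +revert

theorem linearIndependent_cubeDiagonal_succ :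
    LinearIndependent (ZMod 5) fun k : Fin 3 ↦ cubeDiagonal k.succ := by
  rw [Fintype.linearIndependent_iff]
  decide +kernel

theorem sum_cubeDiagonal_succ : ∑ k : Fin 3, cubeDiagonal k.succ = -cubeDiagonal 0 := by
  decide

/-- The diagonals of the cube, as points of the projective space of matrices. -/
def cubeDiagonalLine (i : Fin 4) : ℙ (ZMod 5) (Matrix (Fin 2) (Fin 2) (ZMod 5)) :=
  .mk _ (cubeDiagonal i) (cubeDiagonal_ne_zero i)

theorem cubeDiagonalLine_injective : Function.Injective cubeDiagonalLine := by
  intro i j h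
  have hprop : ∃ c : (ZMod 5)ˣ, c • cubeDiagonal j = cubeDiagonal i :=
    (Projectivization.mk_eq_mk_iff ..).1 h
  clear h
  decide +revert +kernel

/-- The subgroup of matrices whose conjugation action permutes the diagonals of the cube. -/
def cubeStabilizer : Subgroup (GL (Fin 2) (ZMod 5)) :=
  (stabilizer (ConjAct (GL (Fin 2) (ZMod 5))) (Set.range cubeDiagonalLine)).comap
    toConjAct.toMonoidHom

theorem mem_cubeStabilizer_of_smul_eq {A : GL (Fin 2) (ZMod 5)} {s : Perm (Fin 4)}
    (h : ∀ i, toConjAct A • cubeDiagonalLine i = cubeDiagonalLine (s i)) : A ∈ cubeStabilizer :=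
  mem_stabilizer_range_of_smul_eq (Γ := ConjAct (GL (Fin 2) (ZMod 5))) h

/-- The action of `cubeStabilizer` on the four diagonals of the cube. -/
noncomputable def diagonalPerm : cubeStabilizer →* Perm (Fin 4) :=
  (indexPerm cubeDiagonalLine_injective).comp (toConjAct.toMonoidHom.subgroupComap _)

theorem diagonalPerm_eq_iff {A : cubeStabilizer} {s : Perm (Fin 4)} :
    diagonalPerm A = s ↔
      ∀ i, toConjAct (A : GL (Fin 2) (ZMod 5)) • cubeDiagonalLine i = cubeDiagonalLine (s i) :=
  indexPerm_eq_iff (Γ := ConjAct (GL (Fin 2) (ZMod 5))) cubeDiagonalLine_injective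

theorem exists_smul_cubeDiagonal_eq {g : ConjAct (GL (Fin 2) (ZMod 5))}
    (hg : ∀ i, g • cubeDiagonalLine i = cubeDiagonalLine i) :
    ∃ c : (ZMod 5)ˣ, ∀ i, g • cubeDiagonal i = c • cubeDiagonal i := by
  have heigen (i : Fin 4) : ∃ c : (ZMod 5)ˣ, c • cubeDiagonal i = g • cubeDiagonal i :=
    (Projectivization.mk_eq_mk_iff ..).1 (hg i)
  choose c hc using heigen
  have hconst (k : Fin 3) : (c k.succ : ZMod 5) = c 0 := by
    let conj := DistribSMul.toLinearMap (ZMod 5) (Matrix (Fin 2) (Fin 2) (ZMod 5)) g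
    have hconj (i : Fin 4) : conj (cubeDiagonal i) = (c i : ZMod 5) • cubeDiagonal i := (hc i).symm
    refine eigenvalue_eq_of_map_sum_eq_smul linearIndependent_cubeDiagonal_succ
      (fun k ↦ hconj k.succ) ?_ k
    rw [sum_cubeDiagonal_succ, map_neg, smul_neg, hconj]
  refine ⟨c 0, Fin.cases (hc 0).symm fun k ↦ ?_⟩
  rw [← hc, Units.ext (hconst k)]

theorem smul_cubeAxis_eq_self {g : ConjAct (GL (Fin 2) (ZMod 5))}
    (hg : ∀ i, g • cubeDiagonalLine i = cubeDiagonalLine i) (k : Fin 3) :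
    g • cubeAxis k = cubeAxis k := by
  obtain ⟨c, hc⟩ := exists_smul_cubeDiagonal_eq hg
  have haxis (k : Fin 3) : g • cubeAxis k = c • cubeAxis k := by
    simp only [cubeAxis_eq_smul_cubeDiagonal_add k, smul_comm g, smul_comm c, smul_add, hc]
  have hmul : (c * c) • (cubeAxis 0 * cubeAxis 1) = c • (cubeAxis 0 * cubeAxis 1) := by
    calc (c * c) • (cubeAxis 0 * cubeAxis 1)
        = g • cubeAxis 0 * g • cubeAxis 1 := by rw [haxis, haxis, smul_mul_smul_comm]
      _ = g • (cubeAxis 0 * cubeAxis 1) := (smul_mul' g _ _).symm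
      _ = c • (cubeAxis 0 * cubeAxis 1) := by
        rw [cubeAxis_zero_mul_cubeAxis_one, smul_comm g, haxis, smul_comm]
  have hc_one : c = 1 := by
    have hne : cubeAxis 0 * cubeAxis 1 ≠ 0 := by decide
    exact mul_eq_left.1 (Units.ext (smul_left_injective (ZMod 5) hne hmul))
  rw [haxis, hc_one, one_smul]

theorem mem_center_of_commute_cubeAxis {A : GL (Fin 2) (ZMod 5)}
    (h₀ : Commute A.1 (cubeAxis 0)) (h₁ : Commute A.1 (cubeAxis 1)) :
    A ∈ Subgroup.center (GL (Fin 2) (ZMod 5)) := by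
  refine mem_center_of_val_eq_scalar (r := A.1 0 0) ?_
  have hentry {k : Fin 3} (h : Commute A.1 (cubeAxis k)) (i j : Fin 2) :
      A.1 i 0 * cubeAxis k 0 j + A.1 i 1 * cubeAxis k 1 j =
        cubeAxis k i 0 * A.1 0 j + cubeAxis k i 1 * A.1 1 j := by
    simpa only [mul_apply, Fin.sum_univ_two] using congr_fun₂ h.eq i j
  have hupper : A.1 0 0 * 1 + A.1 0 1 * 2 = 1 * A.1 0 0 + 0 * A.1 1 0 := hentry h₁ 0 0
  have hlower : A.1 0 0 * 1 + A.1 0 1 * 0 = 1 * A.1 0 0 + 4 * A.1 1 0 := hentry h₀ 0 0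
  have hdiag : A.1 1 0 * 1 + A.1 1 1 * 2 = 2 * A.1 0 0 + 4 * A.1 1 0 := hentry h₁ 1 0
  have h01 : A.1 0 1 = 0 := by grind
  have h10 : A.1 1 0 = 0 := by grind
  have h11 : A.1 1 1 = A.1 0 0 := by grind
  exact (eta_fin_two A.1).trans (by rw [h01, h10, h11])

theorem forall_smul_cubeDiagonalLine_eq_self_iff {A : GL (Fin 2) (ZMod 5)} :
    (∀ i, toConjAct A • cubeDiagonalLine i = cubeDiagonalLine i) ↔
      A ∈ Subgroup.center (GL (Fin 2) (ZMod 5)) := by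
  refine ⟨fun h ↦ ?_, fun hA i ↦ toConjAct_smul_eq_self_of_mem_center hA _⟩
  have hcomm (k : Fin 3) : Commute A.1 (cubeAxis k) :=
    (Units.mul_inv_eq_iff_eq_mul _).1 (smul_cubeAxis_eq_self h k)
  exact mem_center_of_commute_cubeAxis (hcomm 0) (hcomm 1)

theorem ker_diagonalPerm : diagonalPerm.ker = scalarSubgroup.subgroupOf cubeStabilizer := by
  ext A
  rw [MonoidHom.mem_ker, diagonalPerm_eq_iff, Subgroup.mem_subgroupOf, scalarSubgroup_eq_center]
  exact forall_smul_cubeDiagonalLine_eq_self_iff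

theorem smul_cubeDiagonalLine_eq_finRotate {B : GL (Fin 2) (ZMod 5)} (hB : B.1 = !![3, 0; 4, 4])
    (i : Fin 4) : toConjAct B • cubeDiagonalLine i = cubeDiagonalLine (finRotate 4 i) := by
  refine (toConjAct_smul_mk_eq_mk_iff B _ _).2 ?_
  rw [hB]
  decide +revert +kernel

theorem smul_cubeDiagonalLine_eq_swap_mul_finRotate {A : GL (Fin 2) (ZMod 5)}
    (hA : A.1 = !![0, 3; 3, 4]) (i : Fin 4) :
    toConjAct A • cubeDiagonalLine i =
      cubeDiagonalLine ((swap 2 3 * finRotate 4 : Perm (Fin 4)) i) := by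
  refine (toConjAct_smul_mk_eq_mk_iff A _ _).2 ?_
  rw [hA]
  decide +revert +kernel

/-- The generators of the group `G`, whose conjugation action permutes the axes of the cube. -/
def cubeGenerators : Set (GL (Fin 2) (ZMod 5)) :=
  {h | (h : Matrix (Fin 2) (Fin 2) (ZMod 5)) = !![0, 3; 3, 4] ∨
    (h : Matrix (Fin 2) (Fin 2) (ZMod 5)) = !![2, 0; 0, 2] ∨
    (h : Matrix (Fin 2) (Fin 2) (ZMod 5)) = !![3, 0; 4, 4]}

theorem closure_cubeGenerators_le : Subgroup.closure cubeGenerators ≤ cubeStabilizer := by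
  rw [Subgroup.closure_le]
  rintro A (hA | hA | hA)
  · exact mem_cubeStabilizer_of_smul_eq (smul_cubeDiagonalLine_eq_swap_mul_finRotate hA)
  · exact mem_cubeStabilizer_of_smul_eq (s := 1)
      (forall_smul_cubeDiagonalLine_eq_self_iff.2 (mem_center_of_val_eq_scalar hA))
  · exact mem_cubeStabilizer_of_smul_eq (smul_cubeDiagonalLine_eq_finRotate hA)

theorem diagonalPerm_comp_inclusion_surjective :
    Function.Surjective (diagonalPerm.comp (Subgroup.inclusion closure_cubeGenerators_le)) := by
  rw [← MonoidHom.range_eq_top]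
  have hmem {A : GL (Fin 2) (ZMod 5)} {s : Perm (Fin 4)} (hA : A ∈ cubeGenerators)
      (hs : ∀ i, toConjAct A • cubeDiagonalLine i = cubeDiagonalLine (s i)) :
      s ∈ (diagonalPerm.comp (Subgroup.inclusion closure_cubeGenerators_le)).range :=
    ⟨⟨A, Subgroup.subset_closure hA⟩, diagonalPerm_eq_iff.2 hs⟩
  let A : GL (Fin 2) (ZMod 5) := mkOfDetNeZero !![0, 3; 3, 4] (by decide)
  let B : GL (Fin 2) (ZMod 5) := mkOfDetNeZero !![3, 0; 4, 4] (by decide)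
  have hA : A ∈ cubeGenerators := Or.inl rfl
  have hB : B ∈ cubeGenerators := Or.inr (Or.inr rfl)
  exact eq_top_of_isCycle_mem_of_swap_mul_mem isCycle_finRotate support_finRotate 2
    (hmem hB (smul_cubeDiagonalLine_eq_finRotate rfl))
    (hmem hA (smul_cubeDiagonalLine_eq_swap_mul_finRotate rfl))

end Cube

/-- The image in `PGL₂(F₅)` (the quotient of `GL₂(F₅)` by the scalar
matrices) of the subgroup generated by `[[0,3],[3,4]]`, `[[2,0],[0,2]]` and
`[[3,0],[4,4]]` is isomorphic to the symmetric group `S₄`. -/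
theorem stmt15 (G : Subgroup (GL (Fin 2) (ZMod 5)))
    (hG : G = Subgroup.closure {h : GL (Fin 2) (ZMod 5) |
      (h : Matrix (Fin 2) (Fin 2) (ZMod 5)) = !![0, 3; 3, 4] ∨
      (h : Matrix (Fin 2) (Fin 2) (ZMod 5)) = !![2, 0; 0, 2] ∨
      (h : Matrix (Fin 2) (Fin 2) (ZMod 5)) = !![3, 0; 4, 4]}) :
    Nonempty ((Subgroup.map (QuotientGroup.mk' scalarSubgroup) G) ≃*
      Equiv.Perm (Fin 4)) := by
  subst hG
  have hker : (diagonalPerm.comp (Subgroup.inclusion closure_cubeGenerators_le)).ker =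
      scalarSubgroup.subgroupOf (Subgroup.closure cubeGenerators) := by
    rw [← MonoidHom.comap_ker, ker_diagonalPerm, Subgroup.comap_inclusion_subgroupOf]
  exact nonempty_map_mk'_mulEquiv diagonalPerm_comp_inclusion_surjective hker
end
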